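/- arXiv:2412.20968 — 5 statements merged into one kernel-verified Lean document; each statement's English description precedes it below -/
import Mathlib

section
/- Let A be a commutative ring and let (a_n)_{n∈ℕ} be a sequence of elements of A such that for all m ≤ n the element a_m lies in the ideal generated by a_n (so the principal ideals (a_0) ⊆ (a_1) ⊆ ⋯ form an increasing chain). Let (M_n)_{n∈ℕ} be a family of A-modules such that a_n annihilates M_n for every n. Then the canonical A-linear map from the direct sum ⊕_{n∈ℕ} M_n to the product ∏_{n∈ℕ} M_n is injective, and for every m ∈ ℕ and every x ∈ ∏_{n∈ℕ} M_n the element a_m • x lies in the image of this map; consequently the cokernel of the map is annihilated by every element of the ideal I = ⋃_n (a_n). -/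
/-!
Let `A` be a commutative ring and `(aₙ)` a sequence of elements such that `aₘ ∈ (aₙ)` for
`m ≤ n`.  Let `(Mₙ)` be a family of `A`-modules with `aₙ • Mₙ = 0`.  Then the canonical map
`⊕ₙ Mₙ → ∏ₙ Mₙ` is injective, every element `aₘ • x` of the product lies in its image, and
consequently the cokernel is annihilated by every element of the ideal `I = ⋃ₙ (aₙ)`.

The canonical map `ι` is characterized by `ι f n = f n`.
-/
theorem stmt0 (A : Type) [CommRing A] (a : ℕ → A)
    (hchain : ∀ m n : ℕ, m ≤ n → a m ∈ Ideal.span {a n})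
    (M : ℕ → Type) [∀ n, AddCommGroup (M n)] [∀ n, Module A (M n)]
    (hann : ∀ (n : ℕ) (x : M n), a n • x = 0)
    (ι : (Π₀ n, M n) →ₗ[A] ((n : ℕ) → M n))
    (hι : ∀ (f : Π₀ n, M n) (n : ℕ), ι f n = f n) :
    Function.Injective ι ∧
    (∀ (m : ℕ) (x : (n : ℕ) → M n), a m • x ∈ LinearMap.range ι) ∧
    (∀ b : A, b ∈ ⋃ n, (Ideal.span {a n} : Set A) →
      ∀ x : (n : ℕ) → M n,
        b • (Submodule.Quotient.mk x :
          ((n : ℕ) → M n) ⧸ LinearMap.range ι) = 0) := by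
  have key : ∀ (m : ℕ) (x : (n : ℕ) → M n), a m • x ∈ LinearMap.range ι := by
    intro m x
    refine ⟨DFinsupp.mk (Finset.range m) (fun i => a m • x i), ?_⟩
    funext n
    rw [hι, DFinsupp.mk_apply]
    split_ifs with h
    · rfl
    · have hmn : m ≤ n := by simpa using h
      obtain ⟨c, hc⟩ := Ideal.mem_span_singleton'.1 (hchain m n hmn)
      rw [Pi.smul_apply, ← hc, mul_smul, hann, smul_zero]
  refine ⟨?_, key, ?_⟩
  · intro f g h
    ext n
    rw [← hι f n, ← hι g n, h]
  · intro b hb x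
    obtain ⟨n, hn⟩ := Set.mem_iUnion.1 hb
    obtain ⟨c, hc⟩ := Ideal.mem_span_singleton'.1 hn
    rw [← Submodule.Quotient.mk_smul, Submodule.Quotient.mk_eq_zero, ← hc, mul_smul]
    exact Submodule.smul_mem _ c (key n x)
end

section
/- Let R be a commutative ring, ϖ ∈ R, and p a prime. Let B := R[X,Y]/(XY − ϖ^p) and A := R[X,Y]/(XY − ϖ), each a free R-module with basis {1} ∪ {X^k : k ≥ 1} ∪ {Y^k : k ≥ 1}. The assignment X ↦ X^p, Y ↦ Y^p determines a well-defined R-algebra homomorphism ι : B → A, and ι is injective. Moreover ι is split injective as a morphism of B-modules (A being a B-module via ι): the R-linear map σ : A → B defined on the basis by σ(1) = 1, σ(X^{pk}) = X^k, σ(Y^{pk}) = Y^k for k ≥ 1, and σ(X^k) = σ(Y^k) = 0 whenever p does not divide k, is B-linear and satisfies σ ∘ ι = id_B. -/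
open MvPolynomial

noncomputable section

/-- The ring `R[X,Y]/(XY - ϖ)`. -/
abbrev CurveRing (R : Type) [CommRing R] (ϖ : R) : Type :=
  MvPolynomial (Fin 2) R ⧸
    Ideal.span {(X 0 : MvPolynomial (Fin 2) R) * X 1 - C ϖ}

/-- The class of `X` in `R[X,Y]/(XY - ϖ)`. -/
def cX (R : Type) [CommRing R] (ϖ : R) : CurveRing R ϖ :=
  Ideal.Quotient.mk _ (X 0)

/-- The class of `Y` in `R[X,Y]/(XY - ϖ)`. -/
def cY (R : Type) [CommRing R] (ϖ : R) : CurveRing R ϖ :=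
  Ideal.Quotient.mk _ (X 1)

lemma cXY (R : Type) [CommRing R] (w : R) :
    cX R w * cY R w = algebraMap R (CurveRing R w) w := by
  have h : (Ideal.Quotient.mk (Ideal.span {(X 0 : MvPolynomial (Fin 2) R) * X 1 - C w}))
      (X 0 * X 1 - C w) = 0 :=
    Ideal.Quotient.eq_zero_iff_mem.mpr (Ideal.subset_span rfl)
  rw [map_sub, map_mul, sub_eq_zero] at h
  exact h

lemma curve_smul (R : Type) [CommRing R] (w r : R) (x : CurveRing R w) :
    r • x = algebraMap R (CurveRing R w) r * x := by
  obtain ⟨f, rfl⟩ := Ideal.Quotient.mk_surjective x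
  exact congrArg (Ideal.Quotient.mk _) (smul_eq_C_mul f r)

/-- The value of the splitting on the monomial `X^a Y^b`. -/
def tauVal (R : Type) [CommRing R] (w : R) (p a b : ℕ) : CurveRing R (w ^ p) :=
  if a % p = b % p then
    w ^ (a % p) • (cX R (w ^ p) ^ (a / p) * cY R (w ^ p) ^ (b / p)) else 0

lemma tauVal_addX (R : Type) [CommRing R] (w : R) (p a b : ℕ) (hp : 0 < p) :
    tauVal R w p (p + a) b = cX R (w ^ p) * tauVal R w p a b := by
  unfold tauVal
  rw [Nat.add_mod_left, Nat.add_div_left _ hp]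
  split_ifs
  · rw [curve_smul, curve_smul, pow_succ]; ring
  · simp

lemma tauVal_addY (R : Type) [CommRing R] (w : R) (p a b : ℕ) (hp : 0 < p) :
    tauVal R w p a (p + b) = cY R (w ^ p) * tauVal R w p a b := by
  unfold tauVal
  rw [Nat.add_mod_left, Nat.add_div_left _ hp]
  split_ifs
  · rw [curve_smul, curve_smul, pow_succ]; ring
  · simp

lemma tauVal_step_aux (R : Type) [CommRing R] (w : R) (p q s r t : ℕ) (hr : r < p) (ht : t < p) :
    tauVal R w p (p * q + r + 1) (p * s + t + 1) = w • tauVal R w p (p * q + r) (p * s + t) := by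
  have hp : 0 < p := by omega
  have key : ∀ q r, r < p → (p * q + r) % p = r ∧ (p * q + r) / p = q := by
    intro q r hr
    exact ⟨by rw [Nat.mul_add_mod, Nat.mod_eq_of_lt hr],
      by rw [Nat.mul_add_div hp, Nat.div_eq_of_lt hr, add_zero]⟩
  have key2 : ∀ q r, r + 1 = p → (p * q + r + 1) % p = 0 ∧ (p * q + r + 1) / p = q + 1 := by
    intro q r hr
    have e : p * q + r + 1 = p * (q + 1) + 0 := by rw [add_assoc, hr]; ring
    rw [e]; exact key _ _ hp
  unfold tauVal
  rw [(key q r hr).1, (key q r hr).2, (key s t ht).1, (key s t ht).2]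
  by_cases h1 : r + 1 = p
  · rw [(key2 q r h1).1, (key2 q r h1).2]
    by_cases h2 : t + 1 = p
    · rw [(key2 s t h2).1, (key2 s t h2).2, if_pos rfl, if_pos (by omega), smul_smul,
        ← pow_succ', h1, pow_zero, one_smul, curve_smul, ← cXY]
      ring
    · rw [add_assoc (p * s), (key s (t+1) (by omega)).1, if_neg (by omega), if_neg (by omega),
        smul_zero]
  · rw [add_assoc (p * q), (key q (r+1) (by omega)).1, (key q (r+1) (by omega)).2]
    by_cases h2 : t + 1 = p
    · rw [(key2 s t h2).1, if_neg (by omega), if_neg (by omega), smul_zero]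
    · rw [add_assoc (p * s), (key s (t+1) (by omega)).1, (key s (t+1) (by omega)).2]
      by_cases h3 : r = t
      · rw [if_pos (by omega), if_pos h3, smul_smul, pow_succ']
      · rw [if_neg (by omega), if_neg h3, smul_zero]

lemma tauVal_step (R : Type) [CommRing R] (w : R) (p a b : ℕ) (hp : 0 < p) :
    tauVal R w p (a + 1) (b + 1) = w • tauVal R w p a b := by
  have := tauVal_step_aux R w p (a / p) (b / p) (a % p) (b % p) (Nat.mod_lt _ hp) (Nat.mod_lt _ hp)
  rwa [Nat.div_add_mod, Nat.div_add_mod] at this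

/-- The splitting on the polynomial ring. -/
def tau (R : Type) [CommRing R] (w : R) (p : ℕ) :
    MvPolynomial (Fin 2) R →ₗ[R] CurveRing R (w ^ p) :=
  (basisMonomials (Fin 2) R).constr R (fun m => tauVal R w p (m 0) (m 1))

lemma tau_monomial (R : Type) [CommRing R] (w : R) (p : ℕ) (m : Fin 2 →₀ ℕ) :
    tau R w p (monomial m 1) = tauVal R w p (m 0) (m 1) := by
  have := (basisMonomials (Fin 2) R).constr_basis R (fun m => tauVal R w p (m 0) (m 1)) m
  rwa [coe_basisMonomials] at this

lemma tau_X0 (R : Type) [CommRing R] (w : R) (p k : ℕ) :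
    tau R w p (X 0 ^ k) = tauVal R w p k 0 := by
  rw [X_pow_eq_monomial, tau_monomial]; simp

lemma tau_X1 (R : Type) [CommRing R] (w : R) (p k : ℕ) :
    tau R w p (X 1 ^ k) = tauVal R w p 0 k := by
  rw [X_pow_eq_monomial, tau_monomial]; simp

lemma tau_mulX (R : Type) [CommRing R] (w : R) (p : ℕ) (hp : 0 < p) (f : MvPolynomial (Fin 2) R) :
    tau R w p (X 0 ^ p * f) = cX R (w ^ p) * tau R w p f := by
  have : tau R w p ∘ₗ LinearMap.mulLeft R (X 0 ^ p) =
      LinearMap.mulLeft R (cX R (w ^ p)) ∘ₗ tau R w p := by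
    refine (basisMonomials (Fin 2) R).ext fun m => ?_
    simp only [coe_basisMonomials, LinearMap.comp_apply, LinearMap.mulLeft_apply,
      X_pow_eq_monomial, monomial_mul, one_mul, tau_monomial]
    simpa using tauVal_addX R w p (m 0) (m 1) hp
  exact LinearMap.congr_fun this f

lemma tau_mulY (R : Type) [CommRing R] (w : R) (p : ℕ) (hp : 0 < p) (f : MvPolynomial (Fin 2) R) :
    tau R w p (X 1 ^ p * f) = cY R (w ^ p) * tau R w p f := by
  have : tau R w p ∘ₗ LinearMap.mulLeft R (X 1 ^ p) =
      LinearMap.mulLeft R (cY R (w ^ p)) ∘ₗ tau R w p := by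
    refine (basisMonomials (Fin 2) R).ext fun m => ?_
    simp only [coe_basisMonomials, LinearMap.comp_apply, LinearMap.mulLeft_apply,
      X_pow_eq_monomial, monomial_mul, one_mul, tau_monomial]
    simpa using tauVal_addY R w p (m 0) (m 1) hp
  exact LinearMap.congr_fun this f

lemma tau_rel (R : Type) [CommRing R] (w : R) (p : ℕ) (hp : 0 < p) (f : MvPolynomial (Fin 2) R) :
    tau R w p ((X 0 * X 1) * f) = w • tau R w p f := by
  have : tau R w p ∘ₗ LinearMap.mulLeft R (X 0 * X 1) = w • tau R w p := by
    refine (basisMonomials (Fin 2) R).ext fun m => ?_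
    rw [coe_basisMonomials, LinearMap.comp_apply, LinearMap.mulLeft_apply, LinearMap.smul_apply]
    simp only [X, monomial_mul, one_mul, tau_monomial]
    simpa [add_comm] using tauVal_step R w p (m 0) (m 1) hp
  exact LinearMap.congr_fun this f

lemma tau_ker (R : Type) [CommRing R] (w : R) (p : ℕ) (hp : 0 < p) :
    (Ideal.span {(X 0 : MvPolynomial (Fin 2) R) * X 1 - C w}).restrictScalars R
      ≤ LinearMap.ker (tau R w p) := by
  intro f hf
  rw [Submodule.restrictScalars_mem, Ideal.mem_span_singleton] at hf
  obtain ⟨g, rfl⟩ := hf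
  rw [LinearMap.mem_ker, sub_mul, map_sub, tau_rel R w p hp, ← smul_eq_C_mul, map_smul, sub_self]

lemma tau_out (R : Type) [CommRing R] (w : R) (p : ℕ) (hp : 0 < p) (x : CurveRing R w)
    (f : MvPolynomial (Fin 2) R) (h : Ideal.Quotient.mk _ f = x) :
    tau R w p (Function.surjInv Ideal.Quotient.mk_surjective x) = tau R w p f := by
  rw [← sub_eq_zero, ← map_sub]
  apply tau_ker R w p hp
  rw [Submodule.restrictScalars_mem, ← Ideal.Quotient.eq, h]
  exact Function.surjInv_eq _ x

/-- The splitting. -/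
def sig (R : Type) [CommRing R] (w : R) (p : ℕ) (hp : 0 < p) :
    CurveRing R w →ₗ[R] CurveRing R (w ^ p) where
  toFun x := tau R w p (Function.surjInv Ideal.Quotient.mk_surjective x)
  map_add' x y := by
    obtain ⟨f, rfl⟩ := Ideal.Quotient.mk_surjective x
    obtain ⟨g, rfl⟩ := Ideal.Quotient.mk_surjective y
    rw [tau_out R w p hp _ f rfl, tau_out R w p hp _ g rfl,
      tau_out R w p hp _ (f + g) (map_add _ _ _), map_add]
  map_smul' r x := by
    obtain ⟨f, rfl⟩ := Ideal.Quotient.mk_surjective x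
    rw [tau_out R w p hp _ f rfl, tau_out R w p hp (r • Ideal.Quotient.mk _ f) (r • f) rfl, map_smul]
    rfl

lemma sig_mk (R : Type) [CommRing R] (w : R) (p : ℕ) (hp : 0 < p) (f : MvPolynomial (Fin 2) R) :
    sig R w p hp (Ideal.Quotient.mk _ f) = tau R w p f := tau_out R w p hp _ f rfl

/-- The map `X ↦ X^p`, `Y ↦ Y^p`. -/
def iot (R : Type) [CommRing R] (w : R) (p : ℕ) :
    CurveRing R (w ^ p) →ₐ[R] CurveRing R w :=
  Ideal.Quotient.liftₐ _ (aeval ![cX R w ^ p, cY R w ^ p]) (by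
    intro f hf
    rw [Ideal.mem_span_singleton] at hf
    obtain ⟨g, rfl⟩ := hf
    simp [← mul_pow, cXY])

lemma iot_mk (R : Type) [CommRing R] (w : R) (p : ℕ) (f : MvPolynomial (Fin 2) R) :
    iot R w p (Ideal.Quotient.mk _ f) = aeval ![cX R w ^ p, cY R w ^ p] f := rfl

lemma sig_lin (R : Type) [CommRing R] (w : R) (p : ℕ) (hp : 0 < p)
    (b : CurveRing R (w ^ p)) : ∀ (x : CurveRing R w),
    sig R w p hp (iot R w p b * x) = b * sig R w p hp x := by
  obtain ⟨f, rfl⟩ := Ideal.Quotient.mk_surjective b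
  induction f using MvPolynomial.induction_on with
  | C a =>
    intro x
    have : (Ideal.Quotient.mk (Ideal.span {(X 0 : MvPolynomial (Fin 2) R) * X 1 - C (w ^ p)})) (C a)
      = algebraMap R (CurveRing R (w ^ p)) a := rfl
    rw [this, AlgHom.commutes, ← curve_smul, map_smul, curve_smul]
  | add f g hf hg =>
    intro x
    rw [map_add, map_add, add_mul, map_add, hf, hg, add_mul]
  | mul_X f i hf =>
    intro x
    rw [map_mul (Ideal.Quotient.mk _), map_mul (iot R w p), mul_assoc, hf, mul_assoc]
    congr 1
    obtain ⟨g, rfl⟩ := Ideal.Quotient.mk_surjective x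
    rw [iot_mk, aeval_X]
    fin_cases i
    · refine (sig_mk R w p hp (X 0 ^ p * g)).trans ?_
      rw [tau_mulX R w p hp g, sig_mk]; rfl
    · refine (sig_mk R w p hp (X 1 ^ p * g)).trans ?_
      rw [tau_mulY R w p hp g, sig_mk]; rfl

/-!
With `B = R[X,Y]/(XY - ϖ^p)` and `A = R[X,Y]/(XY - ϖ)`, the assignment `X ↦ X^p`,
`Y ↦ Y^p` determines a well-defined injective `R`-algebra homomorphism `ι : B → A`,
which is split injective as a morphism of `B`-modules: the `R`-linear map `σ : A → B`
with `σ 1 = 1`, `σ (X^(pk)) = X^k`, `σ (Y^(pk)) = Y^k` (for `k ≥ 1`) and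
`σ (X^k) = σ (Y^k) = 0` when `p ∤ k` is `B`-linear and satisfies `σ ∘ ι = id`.
-/
theorem stmt2 (R : Type) [CommRing R] (ϖ : R) (p : ℕ) (hp : p.Prime) :
    ∃ ι : CurveRing R (ϖ ^ p) →ₐ[R] CurveRing R ϖ,
      ι (cX R (ϖ ^ p)) = cX R ϖ ^ p ∧
      ι (cY R (ϖ ^ p)) = cY R ϖ ^ p ∧
      Function.Injective ι ∧
      ∃ σ : CurveRing R ϖ →ₗ[R] CurveRing R (ϖ ^ p),
        σ 1 = 1 ∧
        (∀ k : ℕ, 1 ≤ k → σ (cX R ϖ ^ (p * k)) = cX R (ϖ ^ p) ^ k) ∧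
        (∀ k : ℕ, 1 ≤ k → σ (cY R ϖ ^ (p * k)) = cY R (ϖ ^ p) ^ k) ∧
        (∀ k : ℕ, ¬ p ∣ k → σ (cX R ϖ ^ k) = 0 ∧ σ (cY R ϖ ^ k) = 0) ∧
        (∀ (b : CurveRing R (ϖ ^ p)) (x : CurveRing R ϖ), σ (ι b * x) = b * σ x) ∧
        (∀ b : CurveRing R (ϖ ^ p), σ (ι b) = b) := by
  have hp0 := hp.pos
  have h1 : sig R ϖ p hp0 1 = 1 := by
    have := tau_X0 R ϖ p 0
    rw [pow_zero] at this
    refine (sig_mk R ϖ p hp0 1).trans (this.trans ?_)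
    simp [tauVal]
  have hs : ∀ b, sig R ϖ p hp0 (iot R ϖ p b) = b := by
    intro b
    have := sig_lin R ϖ p hp0 b 1
    rwa [mul_one, h1, mul_one] at this
  have hX : ∀ k, sig R ϖ p hp0 (cX R ϖ ^ k) = tauVal R ϖ p k 0 := fun k =>
    (sig_mk R ϖ p hp0 (X 0 ^ k)).trans (tau_X0 R ϖ p k)
  have hY : ∀ k, sig R ϖ p hp0 (cY R ϖ ^ k) = tauVal R ϖ p 0 k := fun k =>
    (sig_mk R ϖ p hp0 (X 1 ^ k)).trans (tau_X1 R ϖ p k)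
  refine ⟨iot R ϖ p, ?_, ?_, Function.LeftInverse.injective hs, sig R ϖ p hp0, h1, ?_, ?_, ?_,
    sig_lin R ϖ p hp0, hs⟩
  · rw [cX, iot_mk, aeval_X]; rfl
  · rw [cY, iot_mk, aeval_X]; rfl
  · intro k _
    rw [hX]; simp [tauVal, hp0]
  · intro k _
    rw [hY]; simp [tauVal, hp0]
  · intro k hk
    rw [Nat.dvd_iff_mod_eq_zero] at hk
    rw [hX, hY]
    exact ⟨by simp [tauVal, hk], by simp [tauVal, Ne.symm hk]⟩

end
end

section
/- Let p be a prime and let R be a perfect commutative ring of characteristic p, with Frobenius automorphism φ (x ↦ x^p); for n ∈ ℤ write φ^{−n} for the (−n)-th power of φ as a ring automorphism (so φ^{−n} is the n-fold inverse Frobenius when n ≥ 0). Consider the additive maps on the group of finitely supported functions ℤ → R given by δ(r)_n = φ(r_{n−1}) − r_n and τ(r) = ∑_{n∈ℤ} φ^{−n}(r_n). Then the sequence 0 → (ℤ →₀ R) →^δ (ℤ →₀ R) →^τ R → 0 is exact: δ is injective, τ is surjective, and the kernel of τ equals the image of δ. -/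
/-!
For a perfect commutative ring `R` of characteristic `p`, with Frobenius `φ`, the maps
`δ(r)ₙ = φ(r_{n-1}) - rₙ` and `τ(r) = ∑ₙ φ^{-n}(rₙ)` on finitely supported functions
`ℤ →₀ R` fit into a short exact sequence `0 → (ℤ →₀ R) → (ℤ →₀ R) → R → 0`:
`δ` is injective, `τ` is surjective, and `range δ = ker τ`.
-/
theorem stmt4 (p : ℕ) (hp : p.Prime) (R : Type) [CommRing R] [CharP R p]
    [ExpChar R p] [PerfectRing R p]
    (δ : (ℤ →₀ R) →+ (ℤ →₀ R)) (τ : (ℤ →₀ R) →+ R)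
    (hδ : ∀ (r : ℤ →₀ R) (n : ℤ), δ r n = frobenius R p (r (n - 1)) - r n)
    (hτ : ∀ r : ℤ →₀ R,
      τ r = r.sum fun n x => ((frobeniusEquiv R p : RingAut R) ^ (-n)) x) :
    Function.Injective δ ∧ Function.Surjective τ ∧
      AddMonoidHom.range δ = AddMonoidHom.ker τ := by
  have hδs : ∀ n x, δ (Finsupp.single n x)
      = Finsupp.single (n + 1) (frobenius R p x) - Finsupp.single n x := by
    intro n x
    ext m
    rw [hδ, Finsupp.sub_apply]
    congr 1
    by_cases h : n = m - 1
    · have h2 : n + 1 = m := by omega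
      rw [h, Finsupp.single_eq_same, ← h, h2, Finsupp.single_eq_same]
    · have h2 : n + 1 ≠ m := by omega
      simp [Finsupp.single_apply, h, h2]
  have hτs : ∀ n x, τ (Finsupp.single n x)
      = ((frobeniusEquiv R p : RingAut R) ^ (-n)) x := by
    intro n x
    rw [hτ, Finsupp.sum_single_index]
    exact map_zero _
  have hstep : ∀ (n : ℤ) (x : R),
      ((frobeniusEquiv R p : RingAut R) ^ (-(n + 1))) (frobenius R p x)
        = ((frobeniusEquiv R p : RingAut R) ^ (-n)) x := by
    intro n x
    have h : (-n) = -(n + 1) + 1 := by ring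
    conv_rhs => rw [h, zpow_add_one]
    rfl
  have hτδ : ∀ r, τ (δ r) = 0 := by
    intro r
    induction r using Finsupp.induction_linear with
    | zero => simp
    | add f g hf hg => rw [map_add, map_add, hf, hg, add_zero]
    | single n x => rw [hδs, map_sub, hτs, hτs, hstep, sub_self]
  have hsingle : ∀ (n : ℤ) (x : R),
      Finsupp.single n x - Finsupp.single 0 (τ (Finsupp.single n x)) ∈ δ.range := by
    intro n
    induction n using Int.induction_on with
    | zero => intro x; rw [hτs]; simp
    | succ i ih =>
      intro x
      obtain ⟨y, rfl⟩ := (frobeniusEquiv R p).surjective x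
      have h := δ.range.add_mem (ih y) (AddMonoidHom.mem_range.2 ⟨Finsupp.single (i : ℤ) y, rfl⟩)
      rw [hδs, hτs, ← hstep] at h
      rw [hτs]
      convert h using 1
      simp only [coe_frobeniusEquiv]
      abel
    | pred i ih =>
      intro x
      have h := δ.range.sub_mem (ih (frobenius R p x))
        (AddMonoidHom.mem_range.2 ⟨Finsupp.single (-(i : ℤ) - 1) x, rfl⟩)
      have h3 := hstep (-(i : ℤ) - 1) x
      rw [sub_add_cancel] at h3
      rw [hδs, hτs, sub_add_cancel, h3] at h
      rw [hτs]
      convert h using 1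
      abel
  have hall : ∀ r, r - Finsupp.single 0 (τ r) ∈ δ.range := by
    intro r
    induction r using Finsupp.induction_linear with
    | zero => simp
    | add f g hf hg =>
      convert δ.range.add_mem hf hg using 1
      rw [map_add, Finsupp.single_add]
      abel
    | single n x => exact hsingle n x
  refine ⟨?_, ?_, ?_⟩
  · rw [injective_iff_map_eq_zero]
    intro r hr
    have hrec : ∀ n, r n = 0 → r (n - 1) = 0 := by
      intro n hn
      have h := hδ r n
      rw [hr, hn, Finsupp.zero_apply, sub_zero] at h
      exact (frobeniusEquiv R p).injective (by
        rw [map_zero]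
        exact h.symm)
    obtain ⟨N, hN⟩ := r.support.bddAbove
    have hdown : ∀ k : ℕ, ∀ n, r n = 0 → r (n - k) = 0 := by
      intro k
      induction k with
      | zero => intro n hn; simpa using hn
      | succ k ih =>
        intro n hn
        have h := hrec _ (ih n hn)
        rwa [show n - ((k + 1 : ℕ) : ℤ) = n - k - 1 by push_cast; ring]
    ext m
    by_contra hm
    have hmN : m ≤ N := hN (by simpa using hm)
    have hN1 : r (N + 1) = 0 := by
      by_contra h
      have : N + 1 ≤ N := hN (by simpa using h)
      omega
    apply hm
    have h := hdown (N + 1 - m).toNat _ hN1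
    rwa [show N + 1 - ((N + 1 - m).toNat : ℤ) = m by omega] at h
  · intro x
    exact ⟨Finsupp.single 0 x, by rw [hτs]; simp⟩
  · ext r
    constructor
    · rintro ⟨s, rfl⟩
      exact hτδ s
    · intro h
      have h2 := hall r
      rw [AddMonoidHom.mem_ker] at h
      simpa [h] using h2
end

section
/- Let C and D be monoidal categories and let F : C → D be a strong monoidal functor admitting a right adjoint G, with adjunction unit η and counit ε. Assume the projection formula holds: for all objects X of C and Y of D, the canonical morphism X ⊗ G(Y) → G(F(X) ⊗ Y) — defined as the adjoint transpose of the composite F(X ⊗ G(Y)) ≅ F(X) ⊗ F(G(Y)) → F(X) ⊗ Y, where the first map is the monoidal structure isomorphism of F and the second is id ⊗ ε_Y — is an isomorphism. Then F is fully faithful if and only if the unit morphism η at the monoidal unit, 𝟙_C → G(F(𝟙_C)), is an isomorphism. -/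
open CategoryTheory MonoidalCategory

/-!
Let `F : C ⥤ D` be a strong monoidal functor between monoidal categories, with right
adjoint `G`.  Assume the projection formula: for all `X : C`, `Y : D` the canonical map
`X ⊗ G Y → G (F X ⊗ Y)` — the adjoint transpose of
`F (X ⊗ G Y) ≅ F X ⊗ F (G Y) → F X ⊗ Y` (monoidal structure isomorphism followed by
`id ⊗ counit`) — is an isomorphism.  Then `F` is fully faithful if and only if the unit
of the adjunction at the monoidal unit, `𝟙_C ⟶ G (F (𝟙_C))`, is an isomorphism.
-/
theorem stmt7 {C D : Type*} [Category C] [Category D]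
    [MonoidalCategory C] [MonoidalCategory D]
    (F : C ⥤ D) [F.Monoidal] (G : D ⥤ C) (adj : F ⊣ G)
    (hproj : ∀ (X : C) (Y : D),
      IsIso ((adj.homEquiv (X ⊗ G.obj Y) (F.obj X ⊗ Y))
        ((Functor.Monoidal.μIso F X (G.obj Y)).inv ≫ (F.obj X ◁ adj.counit.app Y)))) :
    (F.Full ∧ F.Faithful) ↔ IsIso (adj.unit.app (𝟙_ C)) := by
  constructor
  · rintro ⟨h1, h2⟩
    infer_instance
  · intro h
    have key : ∀ X : C, IsIso (adj.unit.app X) := by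
      intro X
      have hp := hproj X (F.obj (𝟙_ C))
      have e : X ◁ adj.unit.app (𝟙_ C) ≫
          ((adj.homEquiv (X ⊗ G.obj (F.obj (𝟙_ C))) (F.obj X ⊗ F.obj (𝟙_ C)))
            ((Functor.Monoidal.μIso F X (G.obj (F.obj (𝟙_ C)))).inv ≫
              (F.obj X ◁ adj.counit.app (F.obj (𝟙_ C))))) =
          adj.unit.app (X ⊗ 𝟙_ C) ≫ G.map (Functor.Monoidal.μIso F X (𝟙_ C)).inv := by
        refine (adj.homEquiv_naturality_left _ _).symm.trans
          (Eq.trans ?_ (adj.homEquiv_unit (f := (Functor.Monoidal.μIso F X (𝟙_ C)).inv)))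
        refine congrArg _ ?_
        simp only [Functor.Monoidal.μIso_inv]
        have t := adj.left_triangle_components (𝟙_ C)
        have n := Functor.OplaxMonoidal.δ_natural_right (F := F) X (adj.unit.app (𝟙_ C))
        refine (Category.assoc _ _ _).symm.trans ?_
        refine (congrArg (· ≫ F.obj X ◁ adj.counit.app (F.obj (𝟙_ C))) n.symm).trans ?_
        refine (Category.assoc _ _ _).trans ?_
        refine (congrArg (Functor.OplaxMonoidal.δ F X (𝟙_ C) ≫ ·)
          ((MonoidalCategory.whiskerLeft_comp _ _ _).symm.trans
            ((congrArg (F.obj X ◁ ·) t).trans (MonoidalCategory.whiskerLeft_id _ _)))).trans ?_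
        exact Category.comp_id _
      have h1 : IsIso (adj.unit.app (X ⊗ 𝟙_ C) ≫
          G.map (Functor.Monoidal.μIso F X (𝟙_ C)).inv) := by
        rw [← e]
        infer_instance
      have h2 : IsIso (adj.unit.app (X ⊗ 𝟙_ C)) := IsIso.of_isIso_comp_right _
        (G.map (Functor.Monoidal.μIso F X (𝟙_ C)).inv)
      exact (NatTrans.isIso_app_iff_of_iso adj.unit (ρ_ X)).1 h2
    have : IsIso adj.unit := NatIso.isIso_of_isIso_app _
    exact ⟨adj.fullyFaithfulLOfIsIsoUnit.full, adj.fullyFaithfulLOfIsIsoUnit.faithful⟩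
end

section
/- Let C be a symmetric monoidal category, let A be an object of C and let μ : 𝟙 → A be a morphism such that the composite φ := (μ ⊗ id_A) ∘ λ_A^{-1} : A → A ⊗ A is an isomorphism, where λ_A : 𝟙 ⊗ A ≅ A is the left unitor. Then A admits a unique structure of a commutative monoid object in C whose unit is μ; its multiplication is necessarily the inverse φ^{-1} : A ⊗ A → A. In particular, for any two commutative monoid structures on A with unit μ, the multiplications coincide. -/
open CategoryTheory MonoidalCategory

/-!
Let `C` be a symmetric monoidal category, `A` an object and `μ : 𝟙 ⟶ A` such that
`φ = (μ ▷ A) ∘ λ⁻¹ : A ⟶ A ⊗ A` is an isomorphism (an "idempotent algebra").  Then `A`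
admits a unique commutative monoid structure with unit `μ`, and its multiplication is
necessarily `φ⁻¹`.  In particular any two commutative monoid multiplications on `A`
with unit `μ` coincide.
-/
theorem stmt8 {C : Type*} [Category C] [MonoidalCategory C] [SymmetricCategory C]
    (A : C) (μ : 𝟙_ C ⟶ A) [IsIso ((λ_ A).inv ≫ (μ ▷ A))] :
    (∃ m : A ⊗ A ⟶ A,
      (μ ▷ A) ≫ m = (λ_ A).hom ∧
      (A ◁ μ) ≫ m = (ρ_ A).hom ∧
      (m ▷ A) ≫ m = (α_ A A A).hom ≫ (A ◁ m) ≫ m ∧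
      (β_ A A).hom ≫ m = m) ∧
    (∀ m : A ⊗ A ⟶ A,
      ((μ ▷ A) ≫ m = (λ_ A).hom ∧
       (A ◁ μ) ≫ m = (ρ_ A).hom ∧
       (m ▷ A) ≫ m = (α_ A A A).hom ≫ (A ◁ m) ≫ m ∧
       (β_ A A).hom ≫ m = m) →
      m = inv ((λ_ A).inv ≫ (μ ▷ A))) := by
  have iL : IsIso (μ ▷ A) := by
    have h : μ ▷ A = (λ_ A).hom ≫ ((λ_ A).inv ≫ (μ ▷ A)) := by simp
    rw [h]; infer_instance
  have hβ : (A ◁ μ) ≫ (β_ A A).hom = (β_ A (𝟙_ C)).hom ≫ μ ▷ A := by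
    simp
  have iR : IsIso (A ◁ μ) := by
    have h : A ◁ μ = (β_ A (𝟙_ C)).hom ≫ μ ▷ A ≫ (β_ A A).inv := by
      rw [← Category.assoc, Iso.eq_comp_inv, hβ]
    rw [h]; infer_instance
  have iLL : IsIso (μ ▷ (A ⊗ A)) := by
    have h : μ ▷ (A ⊗ A) = (α_ _ A A).inv ≫ (μ ▷ A) ▷ A ≫ (α_ _ _ _).hom := by simp
    rw [h]; infer_instance
  have key : ∀ f g : A ⟶ A ⊗ A, μ ≫ f = μ ≫ g → f = g := by
    intro f g h
    have h1 : A ◁ f = A ◁ g := by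
      rw [← cancel_epi (A ◁ μ), ← MonoidalCategory.whiskerLeft_comp,
        ← MonoidalCategory.whiskerLeft_comp, h]
    have h2 : 𝟙_ C ◁ f = 𝟙_ C ◁ g := by
      rw [← cancel_mono (μ ▷ (A ⊗ A)), whisker_exchange, whisker_exchange, h1]
    have h3 : ∀ k : A ⟶ A ⊗ A, k = (λ_ A).inv ≫ 𝟙_ C ◁ k ≫ (λ_ _).hom := by
      intro k; simp
    rw [h3 f, h3 g, h2]
  have hLR : (λ_ A).inv ≫ μ ▷ A = (ρ_ A).inv ≫ A ◁ μ := by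
    apply key
    rw [leftUnitor_inv_naturality_assoc, rightUnitor_inv_naturality_assoc,
      whisker_exchange, unitors_inv_equal]
  have hm : ∀ m : A ⊗ A ⟶ A, (μ ▷ A) ≫ m = (λ_ A).hom →
      m = inv ((λ_ A).inv ≫ (μ ▷ A)) := by
    intro m h
    apply IsIso.eq_inv_of_hom_inv_id
    rw [Category.assoc, h, Iso.inv_hom_id]
  refine ⟨?_, fun m h => hm m h.1⟩
  obtain ⟨m, hmdef⟩ : ∃ m, m = inv ((λ_ A).inv ≫ (μ ▷ A)) := ⟨_, rfl⟩
  have hL : (μ ▷ A) ≫ m = (λ_ A).hom := by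
    rw [← cancel_epi (λ_ A).inv, ← Category.assoc, hmdef, IsIso.hom_inv_id, Iso.inv_hom_id]
  have hR : (A ◁ μ) ≫ m = (ρ_ A).hom := by
    rw [← cancel_epi (ρ_ A).inv, ← Category.assoc, ← hLR, hmdef, IsIso.hom_inv_id,
      Iso.inv_hom_id]
  refine ⟨m, hL, hR, ?_, ?_⟩
  · rw [← cancel_epi ((μ ▷ A) ▷ A), ← Category.assoc, ← comp_whiskerRight, hL,
      associator_naturality_left_assoc, ← whisker_exchange_assoc, hL]
    simp
  · rw [← cancel_epi (A ◁ μ), ← Category.assoc, hβ, Category.assoc, hL, hR]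
    simp
end
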